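/- If A₀, A₁ are ±1-outcome observables (Hermitian, squaring to identity) on H_A, B₀, B₁ on H_B, and a unit vector |ψ⟩ ∈ H_A⊗H_B satisfies ⟨ψ|S|ψ⟩ = 2√2 where S = A₀⊗B₀ + A₀⊗B₁ + A₁⊗B₀ − A₁⊗B₁, then the anticommutator {A₀,A₁} annihilates the reduced state: ⟨ψ|({A₀,A₁}² ⊗ I)|ψ⟩ = 0, i.e. (A₀A₁ + A₁A₀)⊗I |ψ⟩ = 0. -/

import Mathlib

open Matrix Kronecker

noncomputable section

open scoped ComplexOrder in
/-- If the expectation of a sum of squares of two Hermitian matrices vanishes at `ψ`, then the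
first matrix annihilates `ψ`. -/
lemma mulVec_eq_zero_of_dotProduct_sum_sq_eq_zero {n : Type*} [Fintype n]
    {P Q : Matrix n n ℂ} (hP : P.IsHermitian) (hQ : Q.IsHermitian) {ψ : n → ℂ}
    (h : star ψ ⬝ᵥ ((P * P + Q * Q) *ᵥ ψ) = 0) : P *ᵥ ψ = 0 := by
  have key (R : Matrix n n ℂ) (hR : R.IsHermitian) :
      star ψ ⬝ᵥ ((R * R) *ᵥ ψ) = star (R *ᵥ ψ) ⬝ᵥ (R *ᵥ ψ) := by
    rw [star_mulVec, hR.eq, ← mulVec_mulVec, dotProduct_mulVec]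
  rw [add_mulVec, dotProduct_add, key P hP, key Q hQ] at h
  have hP0 := ((add_eq_zero_iff_of_nonneg (dotProduct_star_self_nonneg (P *ᵥ ψ))
    (dotProduct_star_self_nonneg (Q *ᵥ ψ))).1 h).1
  exact dotProduct_star_self_eq_zero.1 hP0

/-- The commuting-operator form of the CHSH anticommutation relation: a unit vector attaining the
Tsirelson bound is annihilated by the anticommutator of `a₀` and `a₁`. -/
lemma anticommutator_mulVec_eq_zero_of_chsh_eq {n : Type*} [Fintype n] [DecidableEq n]
    {a₀ a₁ b₀ b₁ : Matrix n n ℂ}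
    (ha₀ : a₀.IsHermitian) (ha₁ : a₁.IsHermitian) (hb₀ : b₀.IsHermitian) (hb₁ : b₁.IsHermitian)
    (ha₀sq : a₀ * a₀ = 1) (ha₁sq : a₁ * a₁ = 1) (hb₀sq : b₀ * b₀ = 1) (hb₁sq : b₁ * b₁ = 1)
    (h₀₀ : b₀ * a₀ = a₀ * b₀) (h₀₁ : b₁ * a₀ = a₀ * b₁)
    (h₁₀ : b₀ * a₁ = a₁ * b₀) (h₁₁ : b₁ * a₁ = a₁ * b₁)
    {ψ : n → ℂ} (hψ : star ψ ⬝ᵥ ψ = 1)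
    (hmax : star ψ ⬝ᵥ ((a₀ * b₀ + a₀ * b₁ + a₁ * b₀ - a₁ * b₁) *ᵥ ψ) =
      ((2 * Real.sqrt 2 : ℝ) : ℂ)) :
    (a₀ * a₁ + a₁ * a₀) *ᵥ ψ = 0 := by
  obtain ⟨s, hs⟩ : ∃ s : ℝ, s = Real.sqrt 2 := ⟨_, rfl⟩
  have hss : (s : ℂ) * s = 2 := by
    rw [hs]; exact_mod_cast Real.mul_self_sqrt (by norm_num : (0 : ℝ) ≤ 2)
  have hsa : IsSelfAdjoint (s : ℂ) := Complex.conj_ofReal s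
  have sum_sq : (a₀ + a₁ - (s : ℂ) • b₀) * (a₀ + a₁ - (s : ℂ) • b₀) +
      (a₀ - a₁ - (s : ℂ) • b₁) * (a₀ - a₁ - (s : ℂ) • b₁) =
      (8 : ℂ) • (1 : Matrix n n ℂ) -
        (2 * s : ℂ) • (a₀ * b₀ + a₀ * b₁ + a₁ * b₀ - a₁ * b₁) := by
    simp only [mul_add, add_mul, mul_sub, sub_mul, smul_mul_assoc, mul_smul_comm,
      ha₀sq, ha₁sq, hb₀sq, hb₁sq, h₀₀, h₀₁, h₁₀, h₁₁]
    linear_combination (norm := module) (2 : ℂ) • hss • (1 : Matrix n n ℂ)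
  have hP : (a₀ + a₁ - (s : ℂ) • b₀) *ᵥ ψ = 0 := by
    refine mulVec_eq_zero_of_dotProduct_sum_sq_eq_zero ((ha₀.add ha₁).sub (hb₀.smul hsa))
      ((ha₀.sub ha₁).sub (hb₁.smul hsa)) ?_
    rw [sum_sq, sub_mulVec, smul_mulVec, smul_mulVec, dotProduct_sub, dotProduct_smul,
      dotProduct_smul, one_mulVec, hψ, hmax, ← hs]
    push_cast
    simp only [smul_eq_mul]
    linear_combination (-4 : ℂ) * hss
  have factor : a₀ * a₁ + a₁ * a₀ =
      (a₀ + a₁ + (s : ℂ) • b₀) * (a₀ + a₁ - (s : ℂ) • b₀) := by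
    simp only [mul_add, add_mul, mul_sub, smul_mul_assoc, mul_smul_comm,
      ha₀sq, ha₁sq, hb₀sq, h₀₀, h₁₀]
    linear_combination (norm := module) hss • (1 : Matrix n n ℂ)
  rw [factor, ← mulVec_mulVec, hP, mulVec_zero]

/-- If a unit vector `ψ` attains the Tsirelson bound `⟨ψ|S|ψ⟩ = 2√2` for the CHSH operator
`S`, then the anticommutator `{A₀,A₁}` annihilates the state:
`({A₀,A₁} ⊗ I)|ψ⟩ = 0`, i.e. `⟨ψ|({A₀,A₁}² ⊗ I)|ψ⟩ = 0`. -/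
theorem maximal_chsh_violation_anticommutation {nA nB : ℕ}
    (A₀ A₁ : Matrix (Fin nA) (Fin nA) ℂ) (B₀ B₁ : Matrix (Fin nB) (Fin nB) ℂ)
    (hA₀ : A₀.IsHermitian) (hA₁ : A₁.IsHermitian)
    (hB₀ : B₀.IsHermitian) (hB₁ : B₁.IsHermitian)
    (hA₀sq : A₀ * A₀ = 1) (hA₁sq : A₁ * A₁ = 1)
    (hB₀sq : B₀ * B₀ = 1) (hB₁sq : B₁ * B₁ = 1)
    (ψ : Fin nA × Fin nB → ℂ) (hψ : star ψ ⬝ᵥ ψ = 1)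
    (hmax : star ψ ⬝ᵥ ((A₀ ⊗ₖ B₀ + A₀ ⊗ₖ B₁ + A₁ ⊗ₖ B₀ - A₁ ⊗ₖ B₁) *ᵥ ψ) =
      ((2 * Real.sqrt 2 : ℝ) : ℂ)) :
    ((A₀ * A₁ + A₁ * A₀) ⊗ₖ (1 : Matrix (Fin nB) (Fin nB) ℂ)) *ᵥ ψ = 0 ∧
    star ψ ⬝ᵥ ((((A₀ * A₁ + A₁ * A₀) * (A₀ * A₁ + A₁ * A₀)) ⊗ₖ
      (1 : Matrix (Fin nB) (Fin nB) ℂ)) *ᵥ ψ) = 0 := by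
  have hK {X : Matrix (Fin nA) (Fin nA) ℂ} {Y : Matrix (Fin nB) (Fin nB) ℂ}
      (hX : X.IsHermitian) (hY : Y.IsHermitian) : (X ⊗ₖ Y).IsHermitian := by
    rw [IsHermitian, conjTranspose_kronecker, hX.eq, hY.eq]
  have hanti : ((A₀ * A₁ + A₁ * A₀) ⊗ₖ (1 : Matrix (Fin nB) (Fin nB) ℂ)) *ᵥ ψ = 0 := by
    have h := anticommutator_mulVec_eq_zero_of_chsh_eq
      (a₀ := A₀ ⊗ₖ (1 : Matrix (Fin nB) (Fin nB) ℂ)) (a₁ := A₁ ⊗ₖ 1)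
      (b₀ := (1 : Matrix (Fin nA) (Fin nA) ℂ) ⊗ₖ B₀) (b₁ := 1 ⊗ₖ B₁)
      (hK hA₀ isHermitian_one) (hK hA₁ isHermitian_one)
      (hK isHermitian_one hB₀) (hK isHermitian_one hB₁)
      (by simp [← mul_kronecker_mul, hA₀sq]) (by simp [← mul_kronecker_mul, hA₁sq])
      (by simp [← mul_kronecker_mul, hB₀sq]) (by simp [← mul_kronecker_mul, hB₁sq])
      (by simp [← mul_kronecker_mul]) (by simp [← mul_kronecker_mul])
      (by simp [← mul_kronecker_mul]) (by simp [← mul_kronecker_mul]) hψ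
      (by simpa only [← mul_kronecker_mul, mul_one, one_mul] using hmax)
    simpa only [← mul_kronecker_mul, mul_one, ← add_kronecker] using h
  refine ⟨hanti, ?_⟩
  rw [← mul_one (1 : Matrix (Fin nB) (Fin nB) ℂ), mul_kronecker_mul, ← mulVec_mulVec, hanti,
    mulVec_zero, dotProduct_zero]
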